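/- Let a and b be positive integers with gcd(a, b) = 1 and let p ∈ ℂ[x,y] be an irreducible polynomial that is quasi-homogeneous of type (d; a, b) for some d. Then there exists a nonzero constant c ∈ ℂ such that either p = c·x, or p = c·y, or p = c·(y^a − α·x^b) for some nonzero α ∈ ℂ. -/

import Mathlib

open MvPolynomial

namespace MvPolynomial

/-- A polynomial not divisible by the variable `X i` has a monomial free of `X i`. -/
theorem exists_mem_support_eq_zero_of_not_X_dvd {σ R : Type*} [CommSemiring R]
    {p : MvPolynomial σ R} {i : σ} (h : ¬ X i ∣ p) : ∃ m ∈ p.support, m i = 0 := by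
  by_contra! hm
  refine h ?_
  rw [p.as_sum]
  exact Finset.dvd_sum fun m hmp => X_dvd_monomial.mpr (Or.inr (hm m hmp))

/-- An irreducible polynomial over a field equals any of its non-unit divisors up to a nonzero
constant. -/
theorem exists_eq_C_mul_of_irreducible_of_dvd {σ K : Type*} [Field K]
    {p q : MvPolynomial σ K} (hp : Irreducible p) (hq : ¬ IsUnit q) (h : q ∣ p) :
    ∃ c : K, c ≠ 0 ∧ p = C c * q := by
  obtain ⟨u, hu⟩ := h
  have hunit : IsUnit u := (hp.isUnit_or_isUnit hu).resolve_left hq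
  obtain ⟨c, hc, rfl⟩ := isUnit_iff_eq_C_of_isReduced.mp hunit
  exact ⟨c, hc.ne_zero, hu.trans (mul_comm _ _)⟩

/-- The exponents of a bivariate monomial of weighted degree `a * b * n`, for coprime weights. -/
theorem exists_exponents_of_weight_eq {a b n i j : ℕ} (ha : 0 < a) (hb : 0 < b)
    (hab : Nat.Coprime a b) (h : i * a + j * b = a * b * n) :
    ∃ k l, i = b * k ∧ j = a * l ∧ k + l = n := by
  have hi : b ∣ i := by
    refine hab.symm.dvd_of_dvd_mul_right ((Nat.dvd_add_left (Dvd.intro_left j rfl)).mp ?_)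
    exact ⟨a * n, by rw [h]; ring⟩
  have hj : a ∣ j := by
    refine hab.dvd_of_dvd_mul_right ((Nat.dvd_add_right (Dvd.intro_left i rfl)).mp ?_)
    exact ⟨b * n, by rw [h]; ring⟩
  obtain ⟨k, rfl⟩ := hi
  obtain ⟨l, rfl⟩ := hj
  refine ⟨k, l, rfl, rfl, Nat.eq_of_mul_eq_mul_left (Nat.mul_pos ha hb) ?_⟩
  rw [← h]
  ring

theorem IsWeightedHomogeneous.mul_add_mul_eq {R : Type*} [CommSemiring R] {a b d : ℕ}
    {p : MvPolynomial (Fin 2) R} (hp : p.IsWeightedHomogeneous ![a, b] d)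
    {m : Fin 2 →₀ ℕ} (hm : m ∈ p.support) : m 0 * a + m 1 * b = d := by
  have h := hp (mem_support_iff.mp hm)
  rw [Finsupp.weight_apply, Finsupp.sum_fintype _ _ (by simp)] at h
  simpa [Fin.sum_univ_two] using h

/-- A zero `(1, y)` of a quasi-homogeneous polynomial of degree divisible by both coprime weights
yields a binomial factor. -/
theorem IsWeightedHomogeneous.binomial_dvd_of_eval_eq_zero {R : Type*} [CommRing R] {a b n : ℕ}
    (ha : 0 < a) (hb : 0 < b) (hab : Nat.Coprime a b)
    {p : MvPolynomial (Fin 2) R} (hp : p.IsWeightedHomogeneous ![a, b] (a * b * n))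
    {y : R} (hy : eval ![1, y] p = 0) : X 1 ^ a - C (y ^ a) * X 0 ^ b ∣ p := by
  have hsum : p = ∑ m ∈ p.support,
      (monomial m (coeff m p) - C (coeff m p * y ^ m 1) * X 0 ^ (b * n)) := by
    have hzero : ∑ m ∈ p.support, coeff m p * y ^ m 1 = 0 := by
      rw [eval_eq'] at hy
      simpa [Fin.prod_univ_two] using hy
    rw [Finset.sum_sub_distrib, ← p.as_sum, ← Finset.sum_mul, ← map_sum, hzero]
    simp
  rw [hsum]
  refine Finset.dvd_sum fun m hm => ?_
  obtain ⟨k, l, hk, hl, rfl⟩ := exists_exponents_of_weight_eq ha hb hab (hp.mul_add_mul_eq hm)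
  have hmon : monomial m (coeff m p) - C (coeff m p * y ^ m 1) * X 0 ^ (b * (k + l)) =
      C (coeff m p) * X 0 ^ (b * k) *
        ((X 1 ^ a) ^ l - (C (y ^ a) * X 0 ^ b) ^ l : MvPolynomial (Fin 2) R) := by
    rw [monomial_eq, Finsupp.prod_fintype _ _ (by simp), Fin.prod_univ_two, hk, hl]
    simp only [map_mul, map_pow]
    ring
  rw [hmon]
  exact (sub_dvd_pow_sub_pow _ _ l).mul_left _

/-- A quasi-homogeneous polynomial over an algebraically closed field, of positive degree and
with a monomial free of each variable, has a zero `(1, y)` with `y ≠ 0`. -/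
theorem IsWeightedHomogeneous.exists_eval_eq_zero {K : Type*} [Field K] [IsAlgClosed K]
    {a b d : ℕ} (ha : 0 < a) (hd : d ≠ 0) {p : MvPolynomial (Fin 2) K}
    (hp : p.IsWeightedHomogeneous ![a, b] d) {m₀ m₁ : Fin 2 →₀ ℕ}
    (hm₀ : m₀ ∈ p.support) (h₀ : m₀ 0 = 0) (hm₁ : m₁ ∈ p.support) (h₁ : m₁ 1 = 0) :
    ∃ y : K, y ≠ 0 ∧ eval ![1, y] p = 0 := by
  let g : Polynomial K := ∑ m ∈ p.support, Polynomial.monomial (m 1) (coeff m p)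
  have hg : ∀ y, g.eval y = eval ![1, y] p := fun y => by
    simp [g, eval_eq', Fin.prod_univ_two, Polynomial.eval_finsetSum]
  have hcoeff : ∀ m ∈ p.support, g.coeff (m 1) = coeff m p := fun m hm => by
    simp only [g, Polynomial.finsetSum_coeff, Polynomial.coeff_monomial]
    rw [Finset.sum_eq_single m _ (fun h => absurd hm h), if_pos rfl]
    intro m' hm' hne
    refine if_neg fun h => hne ?_
    have hw := (hp.mul_add_mul_eq hm').trans (hp.mul_add_mul_eq hm).symm
    rw [h] at hw
    have h0 : m' 0 = m 0 := Nat.eq_of_mul_eq_mul_right ha (Nat.add_right_cancel hw)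
    ext i
    fin_cases i
    exacts [h0, h]
  have hdeg : g.degree ≠ 0 := fun h => by
    have hpos : 0 < m₀ 1 := Nat.pos_of_ne_zero fun h1 => hd <| by
      rw [← hp.mul_add_mul_eq hm₀, h₀, h1]
      simp
    have hz := Polynomial.coeff_eq_zero_of_degree_lt (p := g) (n := m₀ 1)
      (by rw [h]; exact_mod_cast hpos)
    exact mem_support_iff.mp hm₀ ((hcoeff m₀ hm₀).symm.trans hz)
  obtain ⟨y, hy⟩ := IsAlgClosed.exists_root g hdeg
  refine ⟨y, ?_, (hg y).symm.trans hy⟩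
  rintro rfl
  refine mem_support_iff.mp hm₁ ((hcoeff m₁ hm₁).symm.trans ?_)
  rw [h₁, Polynomial.coeff_zero_eq_eval_zero]
  exact hy

end MvPolynomial

/-- Classification of irreducible quasi-homogeneous polynomials in `ℂ[x,y]`
with coprime weights: up to a nonzero constant, they are `x`, `y`, or
`y^a - α·x^b` with `α ≠ 0`. -/
theorem irreducible_weighted_homogeneous_classification
    (a b : ℕ) (ha : 0 < a) (hb : 0 < b) (hab : Nat.gcd a b = 1)
    (d : ℕ) (p : MvPolynomial (Fin 2) ℂ) (hirr : Irreducible p)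
    (hph : p.IsWeightedHomogeneous ![a, b] d) :
    ∃ c : ℂ, c ≠ 0 ∧
      (p = C c * X 0 ∨ p = C c * X 1 ∨
        ∃ α : ℂ, α ≠ 0 ∧ p = C c * (X 1 ^ a - C α * X 0 ^ b)) := by
  have not_isUnit : ∀ q : MvPolynomial (Fin 2) ℂ, eval 0 q = 0 → ¬ IsUnit q :=
    fun q hq hu => not_isUnit_zero (hq ▸ hu.map (eval 0))
  by_cases hx : X 0 ∣ p
  · obtain ⟨c, hc, h⟩ := exists_eq_C_mul_of_irreducible_of_dvd hirr (not_isUnit _ (by simp)) hx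
    exact ⟨c, hc, Or.inl h⟩
  by_cases hy : X 1 ∣ p
  · obtain ⟨c, hc, h⟩ := exists_eq_C_mul_of_irreducible_of_dvd hirr (not_isUnit _ (by simp)) hy
    exact ⟨c, hc, Or.inr (Or.inl h)⟩
  obtain ⟨m₀, hm₀, h₀⟩ := exists_mem_support_eq_zero_of_not_X_dvd hx
  obtain ⟨m₁, hm₁, h₁⟩ := exists_mem_support_eq_zero_of_not_X_dvd hy
  have hd : d ≠ 0 := by
    rintro rfl
    have hconst : p = C (coeff 0 p) := by
      ext m
      rw [coeff_C]
      split_ifs with hm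
      · rw [hm]
      by_contra hne
      have hw := hph.mul_add_mul_eq (mem_support_iff.mpr hne)
      simp only [Nat.add_eq_zero_iff, mul_eq_zero, ha.ne', hb.ne', or_false] at hw
      refine hm ?_
      ext i
      fin_cases i
      exacts [hw.1.symm, hw.2.symm]
    have hne : coeff 0 p ≠ 0 := fun h => hirr.ne_zero (by rw [hconst, h, C_0])
    exact hirr.not_isUnit (hconst ▸ hne.isUnit.map C)
  obtain ⟨n, rfl⟩ : a * b ∣ d := by
    refine Nat.Coprime.mul_dvd_of_dvd_of_dvd hab ⟨m₁ 0, ?_⟩ ⟨m₀ 1, ?_⟩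
    · rw [← hph.mul_add_mul_eq hm₁, h₁]
      ring
    · rw [← hph.mul_add_mul_eq hm₀, h₀]
      ring
  obtain ⟨y, hy0, hroot⟩ := hph.exists_eval_eq_zero ha hd hm₀ h₀ hm₁ h₁
  obtain ⟨c, hc, h⟩ := exists_eq_C_mul_of_irreducible_of_dvd hirr
    (not_isUnit _ (by simp [ha.ne', hb.ne']))
    (hph.binomial_dvd_of_eval_eq_zero ha hb hab hroot)
  exact ⟨c, hc, Or.inr (Or.inr ⟨y ^ a, pow_ne_zero a hy0, h⟩)⟩
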